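/- Let ℓ be an odd integer with ℓ ≥ r + 6 ≥ 9. For sufficiently large n, the maximum number of hyperedges in an n-vertex r-uniform hypergraph containing no Berge copy of two vertex-disjoint paths each with ℓ edges equals C(ℓ, r-1)·(n - ℓ) + C(ℓ, r). -/

import Mathlib

/-!
The extremal hypergraph consists of all `r`-sets meeting a fixed `ℓ`-set `A` in at least `r - 1`
points. Each of its hyperedges has at most one point outside `A`, so of any two vertices
represented as adjacent in a Berge copy at least one lies in `A`. As `ℓ` is odd, two disjoint
paths with `ℓ` edges have a matching of `ℓ + 1` edges, which `A` cannot cover.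

For the upper bound, let `H` have no Berge copy. Choosing `K ⊆ H` to maximize
`|K| - |pairShadow K|` and applying Hall's theorem twice (`exists_red_blue`) gives a set `R` of
pairs with `|H| = |K| + |R|`, such that the pairs in `pairShadow K ∪ R` have distinct hyperedges of
`H` representing them. Hence the graph `G` formed by these pairs contains no two disjoint paths with
`ℓ` edges, and it suffices to bound the number of members of `K` (blue) and `R` (red).

Write `C = ℓ.choose (r - 1)`. If `|H|` exceeds the claimed bound, take a vertex set `U` maximizing
`weight K R U - (C - 1) * |U|`. For `n` large `U` is large, because a bounded set has bounded
weight. A vertex of degree `< ℓ` in `G[U]` lies in fewer than `C - 1` blue and red members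
inside `U` (`choose_add_lt`), so by maximality `G[U]` has minimum degree at least `ℓ`.

The structure theorem `NoTwoPaths.cover_or_pendant` describes such graphs. The minimum degree
forces connectedness, and all paths have at most `2ℓ + 1` vertices. A crossing argument in the style
of Dirac and Pósa on a longest path shows that either there is a cycle on `2ℓ` vertices, whose
alternate vertices cover all edges, or there are `ℓ` vertices with no neighbours outside themselves
and one further vertex `c`. In the pendant case, removing these `ℓ` vertices increases the objective
(`weight_le_of_pendant`). In the cover case every vertex outside the cover has at most `C` blue and
red members, so `weight_le_of_cover` gives the claimed bound for `U`; a red pair inside the cover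
costs one unit at every vertex outside it, which is too much when `U` is large. Both cases
contradict the choice of `U`.
-/

open Finset

/-- A Berge copy of the graph `F` in the hypergraph `H`: an injective embedding of the
vertices of `F` together with an injective assignment of distinct hyperedges to the
edges of `F`, each hyperedge containing (the images of) both endpoints of its edge. -/
def IsBergeCopy {α V : Type*} (F : SimpleGraph α) (H : Finset (Finset V)) : Prop :=
  ∃ (f : α → V) (φ : Sym2 α → Finset V),
    Function.Injective f ∧ Set.InjOn φ F.edgeSet ∧
    ∀ e ∈ F.edgeSet, φ e ∈ H ∧ ∀ x ∈ e, f x ∈ φ e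

/-- The Turán number `ex_r(n, Berge-F)`: the maximum number of hyperedges in an
`n`-vertex `r`-uniform hypergraph with no Berge copy of `F`. -/
noncomputable def exBerge {α : Type*} (r n : ℕ) (F : SimpleGraph α) : ℕ :=
  sSup {m | ∃ H : Finset (Finset (Fin n)),
    (∀ e ∈ H, e.card = r) ∧ ¬ IsBergeCopy F H ∧ H.card = m}

/-- The path with `ℓ` edges, on `ℓ+1` vertices. -/
def pathG (ℓ : ℕ) : SimpleGraph (Fin (ℓ + 1)) :=
  SimpleGraph.fromRel (fun x y => (x : ℕ) + 1 = (y : ℕ))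

/-- `c` vertex-disjoint stars, each with `ℓ` edges (centers are the vertices `(i, 0)`). -/
def starsG (c ℓ : ℕ) : SimpleGraph (Fin c × Fin (ℓ + 1)) :=
  SimpleGraph.fromRel (fun x y => x.1 = y.1 ∧ x.2 = 0)

/-- A matching with `t` edges. -/
def matchingG (t : ℕ) : SimpleGraph (Fin t × Fin 2) :=
  SimpleGraph.fromRel (fun x y => x.1 = y.1)

/-- Vertex-disjoint union of `k` paths, the `i`-th having `ℓ i` edges. -/
def pathsG (k : ℕ) (ℓ : Fin k → ℕ) : SimpleGraph (Σ i : Fin k, Fin (ℓ i + 1)) :=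
  SimpleGraph.fromRel (fun x y => x.1 = y.1 ∧ (x.2 : ℕ) + 1 = (y.2 : ℕ))

/-- A hypergraph is connected if every two vertices are joined by a walk of hyperedges
(equivalently, lie on a common Berge path). -/
def HyperConnected {V : Type*} (H : Finset (Finset V)) : Prop :=
  ∀ u v : V, Relation.ReflTransGen (fun a b => ∃ e ∈ H, a ∈ e ∧ b ∈ e) u v

/-- The connected Turán number `ex^con_r(n, Berge-F)`. -/
noncomputable def exConBerge {α : Type*} (r n : ℕ) (F : SimpleGraph α) : ℕ :=
  sSup {m | ∃ H : Finset (Finset (Fin n)),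
    (∀ e ∈ H, e.card = r) ∧ HyperConnected H ∧ ¬ IsBergeCopy F H ∧ H.card = m}

/-! ### Graphs of large minimum degree with no two disjoint long paths -/

section Structure

open scoped Classical

variable {V : Type*} {G : SimpleGraph V}

/-- A path of `G`, given by the list of its (distinct) vertices in order. The empty list is
allowed. -/
def IsListPath (G : SimpleGraph V) (l : List V) : Prop :=
  l.IsChain G.Adj ∧ l.Nodup

/-- A cyclic list of distinct vertices: a path whose last vertex is adjacent to its first one.
A list of two adjacent vertices counts as a cycle, and so does the empty list. -/
def IsListCycle (G : SimpleGraph V) (l : List V) : Prop :=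
  IsListPath G l ∧ ∀ x ∈ l.getLast?, ∀ y ∈ l.head?, G.Adj x y

lemma IsListCycle.rot {l₁ l₂ : List V} (h : IsListCycle G (l₁ ++ l₂)) :
    IsListCycle G (l₂ ++ l₁) := by
  rcases eq_or_ne l₁ [] with rfl | h₁
  · simpa using h
  rcases eq_or_ne l₂ [] with rfl | h₂
  · simpa using h
  obtain ⟨⟨hc, hn⟩, hl⟩ := h
  rw [List.isChain_append] at hc
  obtain ⟨c1, c2, c3⟩ := hc
  obtain ⟨a, ha⟩ := Option.isSome_iff_exists.1 (List.isSome_head?.2 h₁)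
  obtain ⟨b, hb⟩ := Option.isSome_iff_exists.1 (List.isSome_head?.2 h₂)
  obtain ⟨c, hc⟩ := (⟨_, List.getLast?_eq_some_getLast h₁⟩ : ∃ c, l₁.getLast? = some c)
  obtain ⟨d, hd⟩ := (⟨_, List.getLast?_eq_some_getLast h₂⟩ : ∃ c, l₂.getLast? = some c)
  simp only [List.getLast?_append, List.head?_append, ha, hb, hc, hd] at hl c3
  refine ⟨⟨List.isChain_append.2 ⟨c2, c1, ?_⟩, (List.perm_append_comm.nodup_iff).1 hn⟩, ?_⟩
  · simpa only [ha, hd, Option.some_or] using hl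
  · simpa only [List.getLast?_append, List.head?_append, hb, hc, Option.some_or] using c3

lemma IsListCycle.exists_cons {l : List V} (h : IsListCycle G l) {a : V} (ha : a ∈ l) :
    ∃ t, IsListCycle G (a :: t) ∧ (a :: t).Perm l := by
  obtain ⟨s, t, rfl⟩ := List.append_of_mem ha
  exact ⟨t ++ s, by simpa using h.rot, by simpa using (List.perm_append_comm (l₁ := a :: t))⟩

/-- A cycle together with a vertex outside it adjacent to `a` gives a path starting at that vertex
and running once round the cycle. -/
lemma IsListCycle.exists_longer {l : List V} (h : IsListCycle G l) {a b : V} (ha : a ∈ l)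
    (hb : b ∉ l) (hab : G.Adj b a) :
    ∃ t, IsListPath G (b :: a :: t) ∧ (a :: t).Perm l := by
  obtain ⟨t, ht, hp⟩ := h.exists_cons ha
  refine ⟨t, ⟨List.isChain_cons.2 ⟨by simpa using hab, ht.1.1⟩, ?_⟩, hp⟩
  exact List.nodup_cons.2 ⟨fun hm => hb (hp.mem_iff.1 hm), ht.1.2⟩

/-- Two disjoint paths whose first vertices are adjacent and whose last vertices are adjacent form
a cycle. -/
lemma isListCycle_of_split {l₁ l₂ : List V} (h₁ : l₁.IsChain G.Adj) (h₂ : l₂.IsChain G.Adj)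
    (hn : (l₁ ++ l₂).Nodup) (n₁ : l₁ ≠ []) (n₂ : l₂ ≠ [])
    (hh : ∀ x ∈ l₁.head?, ∀ y ∈ l₂.head?, G.Adj x y)
    (hl : ∀ x ∈ l₁.getLast?, ∀ y ∈ l₂.getLast?, G.Adj y x) :
    IsListCycle G (l₁.reverse ++ l₂) := by
  obtain ⟨a, ha⟩ := Option.isSome_iff_exists.1 (List.isSome_head?.2 n₁)
  obtain ⟨b, hb⟩ := Option.isSome_iff_exists.1 (List.isSome_head?.2 n₂)
  obtain ⟨c, hc⟩ := (⟨_, List.getLast?_eq_some_getLast n₁⟩ : ∃ c, l₁.getLast? = some c)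
  obtain ⟨d, hd⟩ := (⟨_, List.getLast?_eq_some_getLast n₂⟩ : ∃ c, l₂.getLast? = some c)
  refine ⟨⟨List.isChain_append.2 ⟨?_, h₂, ?_⟩, ?_⟩, ?_⟩
  · rw [List.isChain_reverse]
    exact h₁.imp fun _ _ h => h.symm
  · simpa [List.getLast?_reverse, ha, hb] using hh
  · exact (((List.reverse_perm l₁).append_right l₂).nodup_iff).2 hn
  · simpa only [List.getLast?_append, List.head?_append, List.head?_reverse, hc, hd,
      Option.some_or, Option.mem_def, Option.some.injEq, forall_eq'] using hl

lemma IsListPath.reverse {l : List V} (h : IsListPath G l) : IsListPath G l.reverse :=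
  ⟨List.isChain_reverse.2 (h.1.imp fun _ _ h => h.symm), List.nodup_reverse.2 h.2⟩

/-- Every set of vertices closed under adjacency is empty or everything. -/
def AdjConnected (G : SimpleGraph V) : Prop :=
  ∀ X : Set V, X.Nonempty → (∀ a ∈ X, ∀ b, G.Adj a b → b ∈ X) → X = Set.univ

/-- If all neighbours of `v` lie on the list `l`, they occupy at least `deg v` positions of `l`. -/
lemma exists_index_card [Fintype V] {v : V} {l : List V} {m : ℕ}
    (hdeg : m ≤ (univ.filter fun w => G.Adj v w).card) (hl : ∀ y, G.Adj v y → y ∈ l) :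
    m ≤ ((range l.length).filter fun i => ∃ y ∈ l[i]?, G.Adj v y).card := by
  refine hdeg.trans ((card_le_card ?_).trans (card_image_le (f := fun i => l.getD i v)))
  intro y hy
  simp only [mem_filter, mem_univ, true_and] at hy
  obtain ⟨i, hi, rfl⟩ := List.getElem_of_mem (hl y hy)
  simp only [mem_image, mem_filter, mem_range]
  exact ⟨i, ⟨hi, _, List.getElem?_eq_getElem hi, hy⟩, by simp [hi]⟩

/-- Minimum degree `m` gives paths with up to `m` edges, inside any adjacency-closed set, by greedy
extension. -/
lemma exists_path_from [Fintype V] {m : ℕ} (hdeg : ∀ v, m ≤ (univ.filter fun w => G.Adj v w).card)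
    (X : Set V) (hX : ∀ a ∈ X, ∀ b, G.Adj a b → b ∈ X) {u : V} (hu : u ∈ X) (j : ℕ) (hj : j ≤ m) :
    ∃ l : List V, IsListPath G l ∧ l.length = j + 1 ∧ ∀ x ∈ l, x ∈ X := by
  induction j with
  | zero => exact ⟨[u], ⟨by simp, by simp⟩, by simp, by simpa using hu⟩
  | succ j ih =>
    obtain ⟨l, hl, hlen, hlX⟩ := ih (by omega)
    cases l with
    | nil => simp at hlen
    | cons x t =>
      have : ∃ y, G.Adj x y ∧ y ∉ x :: t := by
        by_contra! hcon
        have h1 : (univ.filter fun w => G.Adj x w) ⊆ t.toFinset := by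
          intro y hy
          simp only [mem_filter, mem_univ, true_and] at hy
          have := hcon y hy
          simp only [List.mem_cons] at this
          rcases this with rfl | h
          · exact absurd hy (G.loopless.irrefl _)
          · simpa using h
        have h2 := (hdeg x).trans (card_le_card h1)
        have h3 := t.toFinset_card_le
        simp at hlen
        omega
      obtain ⟨y, hxy, hy⟩ := this
      refine ⟨y :: x :: t, ⟨List.isChain_cons.2 ⟨by simpa using hxy.symm, hl.1⟩,
        List.nodup_cons.2 ⟨hy, hl.2⟩⟩, by simpa using hlen, ?_⟩
      intro z hz
      rcases List.mem_cons.1 hz with rfl | hz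
      · exact hX x (hlX x (by simp)) _ hxy
      · exact hlX z hz

/-- `G` has no two vertex-disjoint paths with `ℓ` edges each, that is, with `ℓ + 1` vertices each. -/
def NoTwoPaths (G : SimpleGraph V) (ℓ : ℕ) : Prop :=
  ∀ l₁ l₂ : List V, l₁.IsChain G.Adj → l₂.IsChain G.Adj → (l₁ ++ l₂).Nodup →
    l₁.length = ℓ + 1 → l₂.length = ℓ + 1 → False

/-- With minimum degree `ℓ` each component contains a path with `ℓ` edges, so there is only one
component. -/
lemma NoTwoPaths.adjConnected [Fintype V] {ℓ : ℕ} (h : NoTwoPaths G ℓ)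
    (hdeg : ∀ v, ℓ ≤ (univ.filter fun w => G.Adj v w).card) : AdjConnected G := by
  intro X ⟨u, hu⟩ hX
  by_contra hne
  obtain ⟨v, hv⟩ := (Set.ne_univ_iff_exists_notMem X).1 hne
  obtain ⟨l₁, p₁, len₁, m₁⟩ := exists_path_from hdeg X hX hu ℓ le_rfl
  obtain ⟨l₂, p₂, len₂, m₂⟩ := exists_path_from hdeg Xᶜ
    (fun a ha b hab hb => ha (hX b hb a hab.symm)) hv ℓ le_rfl
  refine h l₁ l₂ p₁.1 p₂.1 (List.nodup_append.2 ⟨p₁.2, p₂.2, ?_⟩) len₁ len₂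
  rintro a ha b hb rfl
  exact m₂ a hb (m₁ a ha)

lemma NoTwoPaths.length_lt {ℓ : ℕ} (h : NoTwoPaths G ℓ) {l : List V} (hl : IsListPath G l) :
    l.length < 2 * ℓ + 2 := by
  by_contra! hlen
  obtain ⟨hc, hn⟩ := hl
  refine h (l.take (ℓ + 1)) ((l.drop (ℓ + 1)).take (ℓ + 1)) (hc.take _) ((hc.drop _).take _)
    ?_ (by simp; omega) (by simp; omega)
  rw [← List.take_add]
  exact hn.sublist (List.take_sublist _ _)

lemma getLast?_take_succ {l : List V} {i : ℕ} (h : i < l.length) :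
    (l.take (i + 1)).getLast? = l[i]? := by
  rw [List.getLast?_take]
  simp [List.getElem?_eq_getElem h]

lemma head?_take_succ {l : List V} {i : ℕ} : (l.take (i + 1)).head? = l[0]? := by
  rw [List.head?_take, List.head?_eq_getElem?]
  simp

lemma getLast?_drop_lt {l : List V} {i : ℕ} (h : i < l.length) :
    (l.drop i).getLast? = l[l.length - 1]? := by
  rw [List.getLast?_drop, if_neg (by omega), List.getLast?_eq_getElem?]

/-- In a connected graph a cycle missing some vertex extends to a path with one more vertex. Hence,
if all paths have at most `p < |V|` vertices, no cycle has `p` vertices. -/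
lemma AdjConnected.no_spanning_cycle [Fintype V] {p : ℕ} (hc : AdjConnected G)
    (hmax : ∀ l, IsListPath G l → l.length ≤ p) (hV : p < Fintype.card V)
    {l : List V} (hl : IsListCycle G l) (hp : l.length = p) (hp0 : 0 < p) : False := by
  have h1 : ∃ a ∈ l, ∃ b, G.Adj a b ∧ b ∉ l := by
    by_contra! hcon
    have h2 := hc {x | x ∈ l} (List.exists_mem_of_length_pos (by omega)) hcon
    have h3 : (univ : Finset V) ⊆ l.toFinset := fun x _ => by
      simpa using (Set.eq_univ_iff_forall.1 h2 x)
    have h4 := card_le_card h3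
    have h5 := l.toFinset_card_le
    rw [card_univ] at h4
    omega
  obtain ⟨a, ha, b, hab, hb⟩ := h1
  obtain ⟨t, ht, hperm⟩ := hl.exists_longer ha hb hab.symm
  have h6 := hmax _ ht
  have h7 := hperm.length_eq
  simp only [List.length_cons] at h6 h7
  omega

lemma mem_of_adj_head {p : ℕ} (hmax : ∀ l, IsListPath G l → l.length ≤ p) {l : List V}
    (hl : IsListPath G l) (hp : l.length = p) {x y : V} (hx : l[0]? = some x) (hxy : G.Adj x y) :
    y ∈ l := by
  by_contra hy
  have := hmax (y :: l) ⟨List.isChain_cons.2 ⟨?_, hl.1⟩, List.nodup_cons.2 ⟨hy, hl.2⟩⟩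
  · simp only [List.length_cons] at this
    omega
  · simpa [List.head?_eq_getElem?, hx] using hxy.symm

lemma mem_of_adj_last {p : ℕ} (hmax : ∀ l, IsListPath G l → l.length ≤ p) {l : List V}
    (hl : IsListPath G l) (hp : l.length = p) {x y : V} (hx : l[p - 1]? = some x)
    (hxy : G.Adj x y) : y ∈ l := by
  rw [← List.mem_reverse]
  refine mem_of_adj_head hmax hl.reverse (by simpa using hp) ?_ hxy
  rw [← List.head?_eq_getElem?, List.head?_reverse, List.getLast?_eq_getElem?, hp, hx]

/-- On a longest path with ends `x` and `w` there are no consecutive vertices `z`, `y` with `x ~ y`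
and `w ~ z`: they would close the path to a cycle on the same vertices. -/
lemma AdjConnected.not_crossing [Fintype V] {p : ℕ} (hc : AdjConnected G)
    (hmax : ∀ l, IsListPath G l → l.length ≤ p) (hV : p < Fintype.card V)
    {l : List V} (hl : IsListPath G l) (hp : l.length = p) {i : ℕ} (hi : i + 1 < p) {x y z w : V}
    (hx : l[0]? = some x) (hy : l[i + 1]? = some y) (hz : l[i]? = some z)
    (hw : l[p - 1]? = some w) (hxy : G.Adj x y) (hwz : G.Adj w z) : False := by
  refine hc.no_spanning_cycle hmax hV (l := (l.take (i + 1)).reverse ++ l.drop (i + 1))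
    (isListCycle_of_split (hl.1.take _) (hl.1.drop _) (by simpa using hl.2) ?_ ?_ ?_ ?_)
    (by simp only [List.length_append, List.length_reverse, List.length_take, List.length_drop]; omega)
    (by omega)
  · intro h; have := congrArg List.length h
    simp only [List.length_take, List.length_nil] at this; omega
  · intro h; have := congrArg List.length h
    simp only [List.length_drop, List.length_nil] at this; omega
  · simpa [head?_take_succ, List.head?_drop, hy, hx] using hxy
  · rw [getLast?_take_succ (by omega), getLast?_drop_lt (by omega), hp, hz, hw]
    simpa using hwz

/-- Counting the positions of neighbours of the two ends of a longest path: by `not_crossing` the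
neighbour positions of `x` and the shifted neighbour positions of `w` are disjoint subsets of
`[1, p - 1]`. When `p = 2 * m + 1` they partition this interval. -/
lemma AdjConnected.count_ends [Fintype V] {p m : ℕ} (hc : AdjConnected G)
    (hdeg : ∀ v, m ≤ (univ.filter fun w => G.Adj v w).card)
    (hmax : ∀ l, IsListPath G l → l.length ≤ p) (hV : p < Fintype.card V)
    {l : List V} (hl : IsListPath G l) (hp : l.length = p) {x w : V}
    (hx : l[0]? = some x) (hw : l[p - 1]? = some w) :
    2 * m + 1 ≤ p ∧ (p = 2 * m + 1 → 
      ((range p).filter fun i => ∃ y ∈ l[i]?, G.Adj x y).card = m ∧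
      ∀ i, i + 1 < p → (∃ y ∈ l[i + 1]?, G.Adj x y) ∨ ∃ y ∈ l[i]?, G.Adj w y) := by
  have hp0 : 0 < p := by
    by_contra h
    have : l = [] := List.eq_nil_of_length_eq_zero (by omega)
    simp [this] at hx
  have hS := exists_index_card (hdeg x) (fun y hy => mem_of_adj_head hmax hl hp hx hy)
  have hT := exists_index_card (hdeg w) (fun y hy => mem_of_adj_last hmax hl hp hw hy)
  rw [hp] at hS hT
  set S := (range p).filter fun i => ∃ y ∈ l[i]?, G.Adj x y with hSdef
  set T := (range p).filter fun i => ∃ y ∈ l[i]?, G.Adj w y with hTdef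
  set T' := T.map ⟨Nat.succ, Nat.succ_injective⟩ with hT'
  have hcT : T'.card = T.card := card_map _
  have hd : Disjoint S T' := by
    rw [Finset.disjoint_left]
    intro i hiS hiT
    simp only [hT', hTdef, hSdef, mem_map, mem_filter, mem_range, Function.Embedding.coeFn_mk]
      at hiS hiT
    obtain ⟨j, ⟨hj, z, hz, hwz⟩, rfl⟩ := hiT
    obtain ⟨hj', y, hy, hxy⟩ := hiS
    exact hc.not_crossing hmax hV hl hp hj' hx hy hz hw hxy hwz
  have hsub : S ∪ T' ⊆ Ico 1 p := by
    intro i hi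
    simp only [hT', hTdef, hSdef, mem_union, mem_map, mem_filter, mem_range,
      Function.Embedding.coeFn_mk] at hi
    rw [mem_Ico]
    rcases hi with ⟨hi, y, hy, hxy⟩ | ⟨j, ⟨hj, y, hy, hwy⟩, rfl⟩
    · refine ⟨?_, hi⟩
      rcases Nat.eq_zero_or_pos i with rfl | h
      · simp only [hx, Option.mem_def, Option.some.injEq] at hy
        subst hy
        exact absurd hxy (G.loopless.irrefl _)
      · exact h
    · refine ⟨by simp, ?_⟩
      rcases eq_or_ne j (p - 1) with rfl | h
      · simp only [hw, Option.mem_def, Option.some.injEq] at hy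
        subst hy
        exact absurd hwy (G.loopless.irrefl _)
      · simp only [Nat.succ_eq_add_one]; omega
  have hcard := card_le_card hsub
  rw [card_union_of_disjoint hd, Nat.card_Ico] at hcard
  refine ⟨by omega, fun hpm => ⟨by omega, fun i hi => ?_⟩⟩
  have heq : S ∪ T' = Ico 1 p := by
    refine eq_of_subset_of_card_le hsub ?_
    rw [card_union_of_disjoint hd, Nat.card_Ico]
    omega
  have : i + 1 ∈ S ∪ T' := by rw [heq, mem_Ico]; omega
  simp only [hT', hTdef, hSdef, mem_union, mem_map, mem_filter, mem_range,
      Function.Embedding.coeFn_mk] at this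
  rcases this with ⟨_, h⟩ | ⟨j, ⟨_, h⟩, hj⟩
  · exact Or.inl h
  · obtain rfl : j = i := by simpa using hj
    exact Or.inr h

/-- A longest path has at least `2 * m + 1` vertices, by `count_ends`. -/
lemma AdjConnected.exists_long_path [Fintype V] [Nonempty V] {m : ℕ} (hc : AdjConnected G)
    (hdeg : ∀ v, m ≤ (univ.filter fun w => G.Adj v w).card) (hV : 2 * m + 1 < Fintype.card V)
    (hmax : ∀ l, IsListPath G l → l.length ≤ 2 * m + 1) :
    ∃ l, IsListPath G l ∧ l.length = 2 * m + 1 := by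
  set P : ℕ → Prop := fun k => ∃ l, IsListPath G l ∧ l.length = k
  have hP1 : P 1 := ⟨[Classical.arbitrary V], ⟨by simp, by simp⟩, rfl⟩
  set p := Nat.findGreatest P (2 * m + 1) with hpdef
  have hp : P p := Nat.findGreatest_spec (P := P) (m := 1) (by omega) hP1
  have hp1 : 1 ≤ p := Nat.le_findGreatest (by omega) hP1
  have hple : p ≤ 2 * m + 1 := Nat.findGreatest_le _
  obtain ⟨l, hl, hlen⟩ := hp
  have hmax' : ∀ l, IsListPath G l → l.length ≤ p := fun l hl =>
    Nat.le_findGreatest (hmax l hl) ⟨l, hl, rfl⟩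
  have := (hc.count_ends hdeg hmax' (by omega) hl hlen
    (List.getElem?_eq_getElem (by omega)) (List.getElem?_eq_getElem (by omega))).1
  exact ⟨l, hl, by omega⟩

/-- Consider a path with `2 * m + 1` vertices from `x` to `w`. If the neighbours of `x` do not form
an initial segment of the path, some position `i + 2` is adjacent to `x` while `i + 1` is not; then
`w` is adjacent to position `i`, and skipping the vertex at `i + 1` closes a cycle on `2 * m`
vertices. Otherwise `x` is adjacent exactly to the positions `1, …, m`, and rotating the path makes
each of the first `m` vertices the end of a longest path, so that none of them has a neighbour
beyond position `m`. -/
lemma AdjConnected.cycle_or_pendant [Fintype V] {m : ℕ} (hm : 1 ≤ m) (hc : AdjConnected G)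
    (hdeg : ∀ v, m ≤ (univ.filter fun w => G.Adj v w).card) (hV : 2 * m + 1 < Fintype.card V)
    (hmax : ∀ l, IsListPath G l → l.length ≤ 2 * m + 1) :
    (∃ l, IsListCycle G l ∧ l.length = 2 * m) ∨
    ∃ (S : Finset V) (c : V), S.card = m ∧ c ∉ S ∧ ∀ x ∈ S, ∀ y, G.Adj x y → y ∈ insert c S := by
  have : Nonempty V := Fintype.card_pos_iff.1 (by omega)
  obtain ⟨l, hl, hlen⟩ := hc.exists_long_path hdeg hV hmax
  have hx : l[0]? = some (l[0]'(by omega)) := List.getElem?_eq_getElem _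
  have hw : l[2 * m + 1 - 1]? = some (l[2 * m + 1 - 1]'(by omega)) := List.getElem?_eq_getElem _
  obtain ⟨hS, hST⟩ := (hc.count_ends hdeg hmax hV hl hlen hx hw).2 rfl
  generalize l[0]'(by omega) = x at *
  generalize l[2 * m + 1 - 1]'(by omega) = w at *
  by_cases hcase : ∃ i, i + 2 < 2 * m + 1 ∧ (∃ y ∈ l[i + 2]?, G.Adj x y) ∧
      ¬ ∃ y ∈ l[i + 1]?, G.Adj x y
  · left
    obtain ⟨i, hi, ⟨y, hy, hxy⟩, hno⟩ := hcase
    obtain ⟨z, hz, hwz⟩ := (hST i (by omega)).resolve_left hno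
    refine ⟨(l.take (i + 1)).reverse ++ l.drop (i + 2),
      isListCycle_of_split (hl.1.take _) (hl.1.drop _) ?_ ?_ ?_ ?_ ?_, by
        simp only [List.length_append, List.length_reverse, List.length_take, List.length_drop]; omega⟩
    · have : (l.take (i + 1) ++ l.drop (i + 2)).Sublist (l.take (i + 1) ++ l.drop (i + 1)) :=
        List.Sublist.append (List.Sublist.refl _) (List.drop_sublist_drop_left _ (by omega))
      rw [List.take_append_drop] at this
      exact hl.2.sublist this
    · intro h; have := congrArg List.length h
      simp only [List.length_take, List.length_nil] at this; omega
    · intro h; have := congrArg List.length h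
      simp only [List.length_drop, List.length_nil] at this; omega
    · simp only [Option.mem_def] at hy
      simpa [head?_take_succ, List.head?_drop, hy, hx] using hxy
    · rw [getLast?_take_succ (by omega), getLast?_drop_lt (by omega), hlen, hz, hw]
      simpa using hwz
  · right
    push Not at hcase
    have hdown : ∀ d i, i + 1 + d < 2 * m + 1 → (∃ y ∈ l[i + 1 + d]?, G.Adj x y) →
        ∃ y ∈ l[i + 1]?, G.Adj x y := by
      intro d
      induction d with
      | zero => exact fun i _ h => h
      | succ d ih =>
        intro i hi h
        refine ih i (by omega) ?_
        rw [show i + 1 + (d + 1) = i + d + 2 by omega] at h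
        rw [show i + 1 + d = i + d + 1 by omega]
        exact hcase (i + d) (by omega) h
    set S := (range (2 * m + 1)).filter fun i => ∃ y ∈ l[i]?, G.Adj x y with hSdef
    have h0S : 0 ∉ S := by
      simp [hSdef, hx]
    have hSeq : S = Icc 1 m := by
      have hsub : S ⊆ Icc 1 m := by
        intro i hi
        have hi0 : i ≠ 0 := fun h => h0S (h ▸ hi)
        have : Icc 1 i ⊆ S := by
          intro j hj
          rw [mem_Icc] at hj
          simp only [hSdef, mem_filter, mem_range] at hi ⊢
          refine ⟨by omega, ?_⟩
          have := hdown (i - j) (j - 1) (by omega)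
            (by rw [show j - 1 + 1 + (i - j) = i by omega]; exact hi.2)
          rwa [show j - 1 + 1 = j by omega] at this
        have := card_le_card this
        rw [Nat.card_Icc] at this
        rw [mem_Icc]; omega
      exact eq_of_subset_of_card_le hsub (by rw [Nat.card_Icc]; omega)
    have hfar : ∀ i, m < i → i < 2 * m + 1 → ∃ y ∈ l[i - 1]?, G.Adj w y := by
      intro i hi hi'
      have := hST (i - 1) (by omega)
      rw [show i - 1 + 1 = i by omega] at this
      refine this.resolve_left fun h => ?_
      have : i ∈ S := by simp only [hSdef, mem_filter, mem_range]; exact ⟨hi', h⟩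
      rw [hSeq, mem_Icc] at this
      omega
    have hndS : (l.take m).Nodup := hl.2.sublist (List.take_sublist _ _)
    refine ⟨(l.take m).toFinset, l[m]'(by omega), ?_, ?_, ?_⟩
    · rw [List.toFinset_card_of_nodup hndS, List.length_take]; omega
    · rw [List.mem_toFinset, List.mem_take_iff_getElem]
      rintro ⟨i, hi, h⟩
      rw [hl.2.getElem_inj_iff] at h
      omega
    · intro a ha b hab
      rw [List.mem_toFinset, List.mem_take_iff_getElem] at ha
      obtain ⟨j, hj, rfl⟩ := ha
      have hjm : j < m := by omega
      -- reversing the segment up to position `j` gives a longest path that starts at `l[j]`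
      have hadj : ∃ y ∈ l[j + 1]?, G.Adj x y := by
        have : j + 1 ∈ S := by rw [hSeq, mem_Icc]; omega
        simp only [hSdef, mem_filter] at this
        exact this.2
      obtain ⟨y, hy, hxy⟩ := hadj
      set l' := (l.take (j + 1)).reverse ++ l.drop (j + 1) with hl'
      have hp' : IsListPath G l' := by
        refine ⟨List.isChain_append.2 ⟨?_, hl.1.drop _, ?_⟩, ?_⟩
        · exact IsListPath.reverse ⟨hl.1.take _, hl.2.sublist (List.take_sublist _ _)⟩ |>.1
        · simp only [Option.mem_def] at hy
          simpa [List.getLast?_reverse, List.head?_take, List.head?_drop, hy,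
            List.head?_eq_getElem?, hx] using hxy
        · exact (((List.reverse_perm _).append_right _).nodup_iff).2 (by simpa using hl.2)
      have hlen' : l'.length = 2 * m + 1 := by simp [hl']; omega
      have hlow : l'[0]? = some (l[j]'(by omega)) := by
        rw [← List.head?_eq_getElem?, hl', List.head?_append, List.head?_reverse,
          getLast?_take_succ (by omega), List.getElem?_eq_getElem (by omega), Option.some_or]
      have hhigh : ∀ i, j < i → l'[i]? = l[i]? := by
        intro i hi
        rw [hl', List.getElem?_append_right (by simp; omega), List.getElem?_drop]
        congr 1
        simp; omega
      have hmem := mem_of_adj_head hmax hp' hlen' hlow hab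
      have hmem' : b ∈ l := by
        have : l'.Perm l := by
          rw [hl']
          refine ((List.reverse_perm _).append_right _).trans ?_
          simp
        exact this.mem_iff.1 hmem
      obtain ⟨i, hi, rfl⟩ := List.getElem_of_mem hmem'
      rcases lt_trichotomy i m with h | h | h
      · refine mem_insert_of_mem ?_
        rw [List.mem_toFinset, List.mem_take_iff_getElem]
        exact ⟨i, by omega, rfl⟩
      · subst h
        exact mem_insert_self _ _
      · exfalso
        obtain ⟨z, hz, hwz⟩ := hfar i h (by omega)
        refine hc.not_crossing hmax hV hp' hlen' (i := i - 1) (by omega) hlow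
          (y := l[i]) ?_ (z := z) ?_ (w := w) ?_ hab hwz
        · rw [show i - 1 + 1 = i by omega, hhigh i (by omega), List.getElem?_eq_getElem]
        · rw [hhigh _ (by omega)]; exact hz
        · rw [hhigh _ (by omega)]; exact hw

/-- Vertices off a cycle on `2 * m` vertices have all their neighbours on it: two adjacent vertices
off the cycle, one of them with a neighbour on it, would give a path with `2 * m + 2` vertices. -/
lemma AdjConnected.neighbors_subset_cycle {m : ℕ} (hm : 1 ≤ m) (hc : AdjConnected G)
    (hmax : ∀ l, IsListPath G l → l.length ≤ 2 * m + 1) {l : List V} (hl : IsListCycle G l)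
    (hlen : l.length = 2 * m) {x y : V} (hx : x ∉ l) (hxy : G.Adj x y) : y ∈ l := by
  have key : ∀ w, w ∉ l → (∃ z ∈ l, G.Adj w z) → ∀ y, G.Adj w y → y ∈ l := by
    rintro w hw ⟨z, hz, hwz⟩ y hwy
    by_contra hy
    obtain ⟨t, ht, hperm⟩ := hl.exists_longer hz hw hwz
    have h1 := hmax (y :: w :: z :: t) ⟨List.isChain_cons.2 ⟨by simpa using hwy.symm, ht.1⟩,
      List.nodup_cons.2 ⟨?_, ht.2⟩⟩
    · have h2 := hperm.length_eq
      simp only [List.length_cons] at h1 h2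
      omega
    · rw [List.mem_cons, hperm.mem_iff]
      rintro (rfl | h)
      · exact G.loopless.irrefl _ hwy
      · exact hy h
  have hX := hc {v | v ∈ l ∨ ∃ z ∈ l, G.Adj v z} ?_ ?_
  · exact key x hx (((Set.eq_univ_iff_forall.1 hX) x).resolve_left hx) y hxy
  · obtain ⟨z, hz⟩ := List.exists_mem_of_length_pos (l := l) (by omega)
    exact ⟨z, Or.inl hz⟩
  · rintro a ha b hab
    by_cases hal : a ∈ l
    · exact Or.inr ⟨a, hal, hab.symm⟩
    · exact Or.inl (key a hal (ha.resolve_left hal) b hab)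

/-- A vertex `x` off the cycle has no two cyclically consecutive neighbours on it, since inserting
`x` between them would produce a cycle on `2 * m + 1` vertices. So `x` is adjacent to exactly every
other vertex of the cycle. -/
lemma AdjConnected.cycle_alternates [Fintype V] {m : ℕ} (hm : 1 ≤ m) (hc : AdjConnected G)
    (hdeg : ∀ v, m ≤ (univ.filter fun w => G.Adj v w).card) (hV : 2 * m + 1 < Fintype.card V)
    (hmax : ∀ l, IsListPath G l → l.length ≤ 2 * m + 1) {l : List V} (hl : IsListCycle G l)
    (hlen : l.length = 2 * m) {x : V} (hx : x ∉ l) :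
    ((range (2 * m)).filter fun i => ∃ y ∈ l[i]?, G.Adj x y).card = m ∧
    ∀ j < 2 * m, (∃ y ∈ l[j]?, G.Adj x y) ∨
      ∃ i < 2 * m, (∃ y ∈ l[i]?, G.Adj x y) ∧ j = (i + 1) % (2 * m) := by
  have hI := exists_index_card (hdeg x)
    (fun y hy => hc.neighbors_subset_cycle hm hmax hl hlen hx hy)
  rw [hlen] at hI
  set I := (range (2 * m)).filter fun i => ∃ y ∈ l[i]?, G.Adj x y with hIdef
  have hinj : Set.InjOn (fun i => (i + 1) % (2 * m)) (I : Set ℕ) := by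
    intro a ha b hb hab
    simp only [hIdef, coe_filter, mem_range, Set.mem_ofPred_eq] at ha hb
    have h1 : a ≡ b [MOD 2 * m] := Nat.ModEq.add_right_cancel' 1 hab
    exact Nat.ModEq.eq_of_lt_of_lt h1 ha.1 hb.1
  set J := I.image fun i => (i + 1) % (2 * m) with hJdef
  have hJ : J.card = I.card := card_image_of_injOn hinj
  have hd : Disjoint I J := by
    rw [Finset.disjoint_left]
    intro j hj hj'
    simp only [hJdef, hIdef, mem_image, mem_filter, mem_range] at hj hj'
    obtain ⟨i, ⟨hi, y, hy, hxy⟩, rfl⟩ := hj'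
    obtain ⟨hj, z, hz, hxz⟩ := hj
    have hrot : IsListCycle G (l.drop (i + 1) ++ l.take (i + 1)) :=
      IsListCycle.rot (by simpa using hl)
    have hhead : (l.drop (i + 1) ++ l.take (i + 1)).head? = some z := by
      rw [List.head?_append, List.head?_drop, head?_take_succ]
      rcases Nat.lt_or_ge (i + 1) (2 * m) with h | h
      · rw [Nat.mod_eq_of_lt h] at hz
        simp only [Option.mem_def] at hz
        rw [hz, Option.some_or]
      · have : i + 1 = 2 * m := by omega
        rw [this, Nat.mod_self] at hz
        simp only [Option.mem_def] at hz
        rw [hz, List.getElem?_eq_none (by omega), Option.none_or]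
    have hlast : (l.drop (i + 1) ++ l.take (i + 1)).getLast? = some y := by
      simp only [Option.mem_def] at hy
      rw [List.getLast?_append, getLast?_take_succ (by omega), hy, Option.some_or]
    refine hc.no_spanning_cycle hmax hV (l := x :: (l.drop (i + 1) ++ l.take (i + 1)))
      ⟨⟨List.isChain_cons.2 ⟨?_, hrot.1.1⟩, List.nodup_cons.2 ⟨?_, hrot.1.2⟩⟩, ?_⟩ ?_ (by omega)
    · simpa [hhead] using hxz
    · rw [List.mem_append, or_comm, ← List.mem_append, List.take_append_drop]
      exact hx
    · rw [List.getLast?_cons, hlast]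
      simpa using hxy.symm
    · simp only [List.length_cons, List.length_append, List.length_drop, List.length_take]
      omega
  have hsub : I ∪ J ⊆ range (2 * m) := by
    intro j hj
    simp only [hJdef, hIdef, mem_union, mem_image, mem_filter, mem_range] at hj ⊢
    rcases hj with h | ⟨i, _, rfl⟩
    · exact h.1
    · exact Nat.mod_lt _ (by omega)
  have hcard := card_le_card hsub
  rw [card_union_of_disjoint hd, card_range] at hcard
  have heq : I ∪ J = range (2 * m) := by
    refine eq_of_subset_of_card_le hsub ?_
    rw [card_union_of_disjoint hd, card_range]
    omega
  refine ⟨by omega, fun j hj => ?_⟩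
  have : j ∈ I ∪ J := by rw [heq, mem_range]; exact hj
  simp only [hJdef, hIdef, mem_union, mem_image, mem_filter, mem_range] at this
  rcases this with h | ⟨i, ⟨hi, h⟩, rfl⟩
  · exact Or.inl h.2
  · exact Or.inr ⟨i, hi, h, rfl⟩

/-- The neighbourhood of a vertex `x` off the cycle covers all edges. An edge between
a non-neighbour of `x` on the cycle and a vertex off the cycle gives a path with `2 * m + 2`
vertices; an edge between two non-neighbours on the cycle gives a cycle through `x` on
`2 * m + 1` vertices. -/
lemma AdjConnected.cover_of_cycle [Fintype V] {m : ℕ} (hm : 1 ≤ m) (hc : AdjConnected G)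
    (hdeg : ∀ v, m ≤ (univ.filter fun w => G.Adj v w).card) (hV : 2 * m + 1 < Fintype.card V)
    (hmax : ∀ l, IsListPath G l → l.length ≤ 2 * m + 1) {l : List V} (hl : IsListCycle G l)
    (hlen : l.length = 2 * m) :
    ∃ A : Finset V, A.card = m ∧ ∀ a b, G.Adj a b → a ∈ A ∨ b ∈ A := by
  obtain ⟨x, hx⟩ : ∃ x, x ∉ l := by
    by_contra! hcon
    have h4 := card_le_card (fun x _ => by simpa using hcon x : (univ : Finset V) ⊆ l.toFinset)
    have h5 := l.toFinset_card_le
    rw [card_univ] at h4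
    omega
  refine ⟨univ.filter fun w => G.Adj x w, le_antisymm ?_ (hdeg x), ?_⟩
  · have h1 := exists_index_card le_rfl
      (fun y hy => hc.neighbors_subset_cycle hm hmax hl hlen hx hy)
    rw [hlen, (hc.cycle_alternates hm hdeg hV hmax hl hlen hx).1] at h1
    exact h1
  -- the last vertex of a cycle started at a non-neighbour of `x` is a neighbour of `x`
  have hlast : ∀ a t, ¬ G.Adj x a → IsListCycle G (a :: t) → (a :: t).Perm l →
      ∃ z ∈ (a :: t)[2 * m - 1]?, G.Adj x z := by
    intro a t hxa ht hp
    have hlen' : (a :: t).length = 2 * m := by rw [hp.length_eq, hlen]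
    have := (hc.cycle_alternates hm hdeg hV hmax ht hlen' (by rwa [hp.mem_iff])).2 0 (by omega)
    rcases this with ⟨y, hy, hxy⟩ | ⟨i, hi, h, hi0⟩
    · simp only [List.getElem?_cons_zero, Option.mem_def, Option.some.injEq] at hy
      subst hy
      exact absurd hxy hxa
    · rcases Nat.lt_or_ge (i + 1) (2 * m) with h' | h'
      · rw [Nat.mod_eq_of_lt h'] at hi0
        omega
      · rwa [show 2 * m - 1 = i by omega]
  have hmix : ∀ a b, ¬ G.Adj x a → a ∈ l → b ∉ l → G.Adj b a → False := by
    intro a b hxa ha hb hba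
    obtain ⟨t, ht, hp⟩ := hl.exists_cons ha
    have hlen' : (a :: t).length = 2 * m := by rw [hp.length_eq, hlen]
    obtain ⟨z, hz, hxz⟩ := hlast a t hxa ht hp
    have hbx : b ≠ x := by rintro rfl; exact hxa hba
    have := hmax (b :: ((a :: t) ++ [x])) ⟨List.isChain_cons.2 ⟨by simpa using hba,
      List.isChain_append.2 ⟨ht.1.1, by simp, ?_⟩⟩, List.nodup_cons.2 ⟨?_, ?_⟩⟩
    · simp only [List.length_cons, List.length_append] at this hlen'
      simp at this
      omega
    · simp only [Option.mem_def] at hz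
      rw [List.getLast?_eq_getElem?, hlen', hz]
      simpa using hxz.symm
    · rw [List.mem_append, hp.mem_iff]
      simp [hb, hbx]
    · rw [List.nodup_append]
      refine ⟨ht.1.2, by simp, ?_⟩
      intro u hu v hv
      rw [List.mem_singleton] at hv
      rw [hp.mem_iff] at hu
      rintro rfl
      exact hx (hv ▸ hu)
  intro a b hab
  by_contra! hcon
  simp only [mem_filter, mem_univ, true_and] at hcon
  obtain ⟨hxa, hxb⟩ := hcon
  by_cases ha : a ∈ l
  swap
  · exact hmix b a hxb (hc.neighbors_subset_cycle hm hmax hl hlen ha hab) ha hab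
  by_cases hb : b ∈ l
  swap
  · exact hmix a b hxa ha hb hab.symm
  obtain ⟨t, ht, hp⟩ := hl.exists_cons ha
  have hlen' : (a :: t).length = 2 * m := by rw [hp.length_eq, hlen]
  obtain ⟨z, hz, hxz⟩ := hlast a t hxa ht hp
  obtain ⟨j, hj, hbj⟩ := List.getElem_of_mem (hp.mem_iff.2 hb)
  have hxl : x ∉ a :: t := by rwa [hp.mem_iff]
  obtain ⟨k, rfl⟩ : ∃ k, j = k + 1 := by
    refine Nat.exists_eq_succ_of_ne_zero ?_
    rintro rfl
    rw [List.getElem_cons_zero] at hbj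
    exact G.loopless.irrefl _ (hbj ▸ hab)
  have hpred : ∃ y ∈ (a :: t)[k]?, G.Adj x y := by
    have := (hc.cycle_alternates hm hdeg hV hmax ht hlen' hxl).2 (k + 1) (by omega)
    rcases this with ⟨y, hy, hxy⟩ | ⟨i, hi, h, hi0⟩
    · rw [List.getElem?_eq_getElem hj, hbj, Option.mem_def, Option.some.injEq] at hy
      subst hy
      exact absurd hxy hxb
    · rcases Nat.lt_or_ge (i + 1) (2 * m) with h' | h'
      · rw [Nat.mod_eq_of_lt h'] at hi0
        rwa [show k = i by omega]
      · rw [show i + 1 = 2 * m by omega, Nat.mod_self] at hi0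
        omega
  obtain ⟨y, hy, hxy⟩ := hpred
  have hhead : (a :: t)[0]? = some a := by simp
  have hbj' : (a :: t)[k + 1]? = some b := by rw [List.getElem?_eq_getElem hj, hbj]
  simp only [Option.mem_def] at hy hz
  generalize hL : a :: t = L at *
  refine hc.no_spanning_cycle hmax hV (l := x :: ((L.take (k + 1)).reverse ++ L.drop (k + 1)))
    ⟨⟨List.isChain_cons.2 ⟨?_, List.isChain_append.2 ⟨?_, ht.1.1.drop _, ?_⟩⟩,
      List.nodup_cons.2 ⟨?_, ?_⟩⟩, ?_⟩ ?_ (by omega)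
  · rw [List.head?_append, List.head?_reverse, getLast?_take_succ (by omega), hy, Option.some_or]
    simpa using hxy
  · exact IsListPath.reverse ⟨ht.1.1.take _, ht.1.2.sublist (List.take_sublist _ _)⟩ |>.1
  · rw [List.getLast?_reverse, head?_take_succ, List.head?_drop, hhead, hbj']
    simpa using hab
  · rw [((List.reverse_perm _).append_right _).mem_iff, List.take_append_drop]
    exact hxl
  · exact (((List.reverse_perm _).append_right _).nodup_iff).2 (by simpa using ht.1.2)
  · rw [List.getLast?_cons, List.getLast?_append, getLast?_drop_lt (by omega), hlen', hz]
    simpa using hxz.symm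
  · simp only [List.length_cons, List.length_append, List.length_drop, List.length_take,
      List.length_reverse]
    omega

/-- A graph of minimum degree at least `m` on more than `2 * m + 1` vertices with no two disjoint
paths with `m` edges either has a vertex cover of size `m`, or has `m` vertices with no
neighbours outside themselves and a single further vertex `c`. -/
theorem NoTwoPaths.cover_or_pendant [Fintype V] {m : ℕ} (hm : 1 ≤ m) (h : NoTwoPaths G m)
    (hdeg : ∀ v, m ≤ (univ.filter fun w => G.Adj v w).card) (hV : 2 * m + 1 < Fintype.card V) :
    (∃ A : Finset V, A.card = m ∧ ∀ a b, G.Adj a b → a ∈ A ∨ b ∈ A) ∨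
    ∃ (S : Finset V) (c : V), S.card = m ∧ c ∉ S ∧
      ∀ x ∈ S, ∀ y, G.Adj x y → y ∈ insert c S := by
  have hc := h.adjConnected hdeg
  have hmax : ∀ l, IsListPath G l → l.length ≤ 2 * m + 1 := fun l hl => by
    have := h.length_lt hl
    omega
  rcases hc.cycle_or_pendant hm hdeg hV hmax with ⟨l, hl, hlen⟩ | h
  · exact Or.inl (hc.cover_of_cycle hm hdeg hV hmax hl hlen)
  · exact Or.inr h

end Structure

/-! ### Reducing a hypergraph to red and blue pairs -/

section RedBlue

variable {V : Type*} [DecidableEq V]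

/-- The 2-element sets contained in members of `K`. -/
def pairShadow (K : Finset (Finset V)) : Finset (Finset V) :=
  K.biUnion fun e => e.powersetCard 2

lemma mem_pairShadow {K : Finset (Finset V)} {p : Finset V} :
    p ∈ pairShadow K ↔ ∃ e ∈ K, p ⊆ e ∧ p.card = 2 := by
  simp [pairShadow, mem_powersetCard]

/-- The reduction of a hypergraph `H` to blue hyperedges `K` and red pairs `R`. Let `K` maximize
`|K| - |pairShadow K|`. Maximality over supersets of `K` is Hall's condition for assigning to every
hyperedge outside `K` its own pair not in `pairShadow K` (these form `R`); maximality over subsets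
is Hall's condition for representing every pair of `pairShadow K` by its own member of `K`. -/
lemma exists_red_blue (H : Finset (Finset V)) :
    ∃ (K R : Finset (Finset V)) (ψ : Finset V → Finset V), K ⊆ H ∧ (∀ p ∈ R, p.card = 2) ∧
      Disjoint R (pairShadow K) ∧ H.card = K.card + R.card ∧
      Set.InjOn ψ (pairShadow K ∪ R : Finset (Finset V)) ∧
      ∀ p ∈ pairShadow K ∪ R, ψ p ∈ H ∧ p ⊆ ψ p := by
  classical
  obtain ⟨K, hKH, hK⟩ := exists_max_image H.powerset
    (fun K => (K.card : ℤ) - (pairShadow K).card) ⟨∅, by simp⟩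
  rw [mem_powerset] at hKH
  simp only [mem_powerset] at hK
  obtain ⟨g, hg, hgt⟩ := (all_card_le_biUnion_card_iff_exists_injective
    (fun h : {h // h ∈ H \ K} => h.1.powersetCard 2 \ pairShadow K)).1 (by
      intro s
      set X := s.map (Function.Embedding.subtype _) with hX
      have hXH : X ⊆ H \ K := by
        intro x hx
        simp only [hX, mem_map, Function.Embedding.coe_subtype] at hx
        obtain ⟨y, _, rfl⟩ := hx
        exact y.2
      have h1 : pairShadow (K ∪ X) ⊆
          pairShadow K ∪ s.biUnion fun h => h.1.powersetCard 2 \ pairShadow K := by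
        intro p hp
        rw [mem_pairShadow] at hp
        obtain ⟨e, he, hpe, hp2⟩ := hp
        rw [mem_union, or_iff_not_imp_left]
        intro hpK
        rcases mem_union.1 he with he | he
        · exact absurd (mem_pairShadow.2 ⟨e, he, hpe, hp2⟩) hpK
        · simp only [hX, mem_map, Function.Embedding.coe_subtype] at he
          obtain ⟨y, hy, rfl⟩ := he
          rw [mem_biUnion]
          exact ⟨y, hy, mem_sdiff.2 ⟨mem_powersetCard.2 ⟨hpe, hp2⟩, hpK⟩⟩
      have h2 := (card_le_card h1).trans (card_union_le _ _)
      have h3 := hK (K ∪ X) (union_subset hKH (hXH.trans sdiff_subset))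
      have h4 : (K ∪ X).card = K.card + X.card :=
        card_union_of_disjoint (Finset.disjoint_left.2 fun a ha hb => (mem_sdiff.1 (hXH hb)).2 ha)
      have h5 : X.card = s.card := card_map _
      omega)
  obtain ⟨b, hb, hbt⟩ := (all_card_le_biUnion_card_iff_exists_injective
    (fun p : {p // p ∈ pairShadow K} => K.filter fun e => p.1 ⊆ e)).1 (by
      intro s
      set T := s.biUnion fun p => K.filter fun e => p.1 ⊆ e with hT
      set Y := s.map (Function.Embedding.subtype _) with hY
      have hTK : T ⊆ K := by
        intro e he
        simp only [hT, mem_biUnion, mem_filter] at he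
        obtain ⟨_, _, h, _⟩ := he
        exact h
      have hYK : Y ⊆ pairShadow K := by
        intro x hx
        simp only [hY, mem_map, Function.Embedding.coe_subtype] at hx
        obtain ⟨y, _, rfl⟩ := hx
        exact y.2
      have h1 : pairShadow (K \ T) ⊆ pairShadow K \ Y := by
        intro p hp
        rw [mem_pairShadow] at hp
        obtain ⟨e, he, hpe, hp2⟩ := hp
        rw [mem_sdiff] at he ⊢
        refine ⟨mem_pairShadow.2 ⟨e, he.1, hpe, hp2⟩, fun hpY => he.2 ?_⟩
        simp only [hY, mem_map, Function.Embedding.coe_subtype] at hpY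
        obtain ⟨y, hy, rfl⟩ := hpY
        simp only [hT, mem_biUnion, mem_filter]
        exact ⟨y, hy, he.1, hpe⟩
      have h2 := card_le_card h1
      rw [card_sdiff_of_subset hYK] at h2
      have h3 := hK (K \ T) (sdiff_subset.trans hKH)
      have h4 := card_sdiff_of_subset hTK
      have h5 : Y.card = s.card := card_map _
      have h6 := card_le_card hTK
      have h7 := card_le_card hYK
      omega)
  have hgR : ∀ i, (g i).card = 2 ∧ g i ∉ pairShadow K ∧ g i ⊆ i.1 := by
    intro i
    have := hgt i
    rw [mem_sdiff, mem_powersetCard] at this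
    exact ⟨this.1.2, this.2, this.1.1⟩
  set ψ : Finset V → Finset V := fun p =>
    if h : p ∈ pairShadow K then b ⟨p, h⟩ else if h : ∃ i, g i = p then h.choose.1 else ∅ with hψ
  have hψB : ∀ p (h : p ∈ pairShadow K), ψ p = b ⟨p, h⟩ := fun p h => by simp [hψ, h]
  have hψR : ∀ i, ψ (g i) = i.1 := fun i => by
    have hex : ∃ j, g j = g i := ⟨i, rfl⟩
    have : hex.choose = i := hg hex.choose_spec
    simp only [hψ]
    rw [dif_neg (hgR i).2.1, dif_pos hex, this]
  have hbK : ∀ p, b p ∈ K ∧ p.1 ⊆ b p := fun p => by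
    have := hbt p
    rwa [mem_filter] at this
  refine ⟨K, univ.image g, ψ, hKH, ?_, ?_, ?_, ?_, ?_⟩
  · intro p hp
    obtain ⟨i, _, rfl⟩ := mem_image.1 hp
    exact (hgR i).1
  · rw [Finset.disjoint_left]
    intro p hp
    obtain ⟨i, _, rfl⟩ := mem_image.1 hp
    exact (hgR i).2.1
  · rw [card_image_of_injective _ hg, card_univ, Fintype.card_coe, card_sdiff_of_subset hKH]
    have := card_le_card hKH
    omega
  · intro p hp q hq hpq
    simp only [coe_union, Set.mem_union, mem_coe, mem_image, mem_univ, true_and] at hp hq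
    rcases hp with hp | ⟨i, rfl⟩ <;> rcases hq with hq | ⟨j, rfl⟩
    · rw [hψB p hp, hψB q hq] at hpq
      simpa using hb hpq
    · rw [hψB p hp, hψR] at hpq
      exact absurd (hpq ▸ (hbK _).1) (mem_sdiff.1 j.2).2
    · rw [hψB q hq, hψR] at hpq
      exact absurd (hpq ▸ (hbK _).1) (mem_sdiff.1 i.2).2
    · rw [hψR, hψR] at hpq
      rw [Subtype.ext hpq]
  · intro p hp
    rcases mem_union.1 hp with hp | hp
    · rw [hψB p hp]
      exact ⟨hKH (hbK _).1, (hbK ⟨p, hp⟩).2⟩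
    · obtain ⟨i, _, rfl⟩ := mem_image.1 hp
      rw [hψR]
      exact ⟨(mem_sdiff.1 i.2).1, (hgR i).2.2⟩

/-- The graph whose edges are the two-element sets in `P`; singletons in `P` are ignored. -/
def pairGraph (P : Finset (Finset V)) : SimpleGraph V where
  Adj a b := a ≠ b ∧ {a, b} ∈ P
  symm := ⟨fun a b h => ⟨h.1.symm, by rw [pair_comm]; exact h.2⟩⟩
  loopless := ⟨fun _ h => h.1 rfl⟩

/-- A copy of `F` among pairs with distinct representing hyperedges in `H` is a Berge copy in `H`. -/
lemma isBergeCopy_of_pairGraph {α : Type*} {F : SimpleGraph α} {H P : Finset (Finset V)}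
    {ψ : Finset V → Finset V} (hinj : Set.InjOn ψ P) (hψ : ∀ p ∈ P, ψ p ∈ H ∧ p ⊆ ψ p)
    {f : α → V} (hf : Function.Injective f) (hadj : ∀ a b, F.Adj a b → (pairGraph P).Adj (f a) (f b)) :
    IsBergeCopy F H := by
  classical
  have hmem : ∀ e ∈ F.edgeSet, (e.map f).toFinset ∈ P := by
    intro e
    induction e using Sym2.ind with
    | _ a b =>
      intro he
      have := (hadj a b he).2
      simpa [Sym2.toFinset_mk_eq] using this
  refine ⟨f, fun e => ψ (e.map f).toFinset, hf, ?_, ?_⟩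
  · intro e he e' he' hee
    have := hinj (hmem e he) (hmem e' he') hee
    refine Sym2.map.injective hf (Sym2.ext fun x => ?_)
    rw [← Sym2.mem_toFinset, this, Sym2.mem_toFinset]
  · intro e he
    refine ⟨(hψ _ (hmem e he)).1, fun x hx => (hψ _ (hmem e he)).2 ?_⟩
    rw [Sym2.mem_toFinset, Sym2.mem_map]
    exact ⟨x, hx, rfl⟩

lemma noTwoPaths_of_not_isBergeCopy {ℓ : ℕ} {H P : Finset (Finset V)}
    {ψ : Finset V → Finset V} (hinj : Set.InjOn ψ P) (hψ : ∀ p ∈ P, ψ p ∈ H ∧ p ⊆ ψ p)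
    (hH : ¬ IsBergeCopy ((pathG ℓ).sum (pathG ℓ)) H) : NoTwoPaths (pairGraph P) ℓ := by
  intro l₁ l₂ c₁ c₂ hn n₁ n₂
  have hpath : ∀ l : List V, l.IsChain (pairGraph P).Adj → ∀ n : l.length = ℓ + 1,
      ∀ a b : Fin (ℓ + 1), (pathG ℓ).Adj a b → (pairGraph P).Adj l[a] l[b] := by
    intro l hc n a b hab
    rw [List.isChain_iff_getElem] at hc
    obtain ⟨hne, h | h⟩ := hab
    · have := hc a (by omega)
      simpa only [h, Fin.getElem_fin] using this
    · have := (hc b (by omega)).symm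
      simpa only [h, Fin.getElem_fin] using this
  rw [List.nodup_append] at hn
  refine hH (isBergeCopy_of_pairGraph hinj hψ
    (f := Sum.elim (fun a => l₁[a]) fun a => l₂[a]) ?_ ?_)
  · rintro (a | a) (b | b) hab
    · simp only [Sum.elim_inl, Fin.getElem_fin] at hab
      rw [hn.1.getElem_inj_iff] at hab
      rw [Fin.ext hab]
    · exact absurd hab (hn.2.2 _ (List.getElem_mem _) _ (List.getElem_mem _))
    · exact absurd hab.symm (hn.2.2 _ (List.getElem_mem _) _ (List.getElem_mem _))
    · simp only [Sum.elim_inr, Fin.getElem_fin] at hab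
      rw [hn.2.1.getElem_inj_iff] at hab
      rw [Fin.ext hab]
  · rintro (a | a) (b | b) hab
    · exact hpath l₁ c₁ n₁ a b hab
    · exact absurd hab (by simp)
    · exact absurd hab (by simp)
    · exact hpath l₂ c₂ n₂ a b hab

end RedBlue

/-! ### Counting blue and red members, and the upper bound -/

section Weights

lemma self_le_choose {n k : ℕ} (hk : 1 ≤ k) (hkn : k + 1 ≤ n) : n ≤ n.choose k := by
  induction n generalizing k with
  | zero => omega
  | succ n ih =>
    obtain ⟨k, rfl⟩ : ∃ j, k = j + 1 := ⟨k - 1, by omega⟩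
    rw [Nat.choose_succ_succ']
    rcases Nat.eq_or_lt_of_le hkn with h | h
    · obtain rfl : n = k + 1 := by omega
      simp
    · have := ih (k := k + 1) (by omega) (by omega)
      have : 1 ≤ n.choose k := Nat.choose_pos (by omega)
      omega

lemma choose_pascal {r ℓ : ℕ} (hl : r + 6 ≤ ℓ) (hr : 3 ≤ r) :
    ℓ.choose (r - 1) = (ℓ - 1).choose (r - 2) + (ℓ - 1).choose (r - 1) := by
  obtain ⟨m, rfl⟩ : ∃ m, ℓ = m + 1 := ⟨ℓ - 1, by omega⟩
  obtain ⟨s, rfl⟩ : ∃ s, r = s + 2 := ⟨r - 2, by omega⟩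
  simp [Nat.choose_succ_succ]

lemma two_mul_le_choose {r ℓ : ℕ} (hl : r + 6 ≤ ℓ) (hr : 3 ≤ r) :
    2 * ℓ ≤ ℓ.choose (r - 1) + 2 := by
  have h1 : ℓ - 1 ≤ (ℓ - 1).choose (r - 2) := self_le_choose (by omega) (by omega)
  have h2 : ℓ - 1 ≤ (ℓ - 1).choose (r - 1) := self_le_choose (by omega) (by omega)
  rw [choose_pascal hl hr]
  omega

/-- A vertex with `b < ℓ` blue and `ρ` red neighbours, `b + ρ ≤ ℓ` in total, lies in fewer than
`ℓ.choose (r - 1)` blue and red members. -/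
lemma choose_add_lt {r ℓ b ρ : ℕ} (hl : r + 6 ≤ ℓ) (hr : 3 ≤ r) (hb : b < ℓ) (hbρ : b + ρ ≤ ℓ) :
    b.choose (r - 1) + ρ + 1 ≤ ℓ.choose (r - 1) := by
  have h1 : ℓ - 1 ≤ (ℓ - 1).choose (r - 2) := self_le_choose (by omega) (by omega)
  rcases Nat.lt_or_ge b 2 with h | h
  · rw [Nat.choose_eq_zero_of_lt (by omega)]
    have := two_mul_le_choose hl hr
    omega
  · have : b.choose (r - 1) ≤ (ℓ - 1).choose (r - 1) := Nat.choose_le_choose _ (by omega)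
    rw [choose_pascal hl hr]
    omega

/-- The number of `r`-sets and pairs in an `(ℓ + 1)`-set is smaller than what `ℓ` vertices of weight
`ℓ.choose (r - 1) - 1` contribute. -/
lemma pendant_choose_lt {r ℓ : ℕ} (hl : r + 6 ≤ ℓ) (hr : 3 ≤ r) :
    (ℓ + 1).choose r + (ℓ + 1).choose 2 + ℓ < ℓ.choose (r - 1) * ℓ := by
  have h1 := two_mul_le_choose hl hr
  have h2 : (ℓ + 1) * ℓ.choose (r - 1) = (ℓ + 1).choose r * r := by
    have := Nat.add_one_mul_choose_eq ℓ (r - 1)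
    rwa [show r - 1 + 1 = r by omega] at this
  have h3 : (ℓ + 1) * ℓ = (ℓ + 1).choose 2 * 2 := by
    have := Nat.add_one_mul_choose_eq ℓ 1
    simpa using this
  have h4 : (ℓ + 1).choose r * 3 ≤ (ℓ + 1).choose r * r := Nat.mul_le_mul_left _ hr
  generalize (ℓ + 1).choose r = x at *
  generalize (ℓ + 1).choose 2 = y at *
  generalize ℓ.choose (r - 1) = C at *
  have h5 : 9 ≤ ℓ := by omega
  zify at *
  nlinarith

variable {V : Type*} [DecidableEq V]

/-- Number of members of `K` and `R` inside `U`. -/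
def weight (K R : Finset (Finset V)) (U : Finset V) : ℕ :=
  (K.filter fun e => e ⊆ U).card + (R.filter fun e => e ⊆ U).card

/-- Number of members of `K` and `R` that lie inside `U` and contain `v`. -/
def starWeight (K R : Finset (Finset V)) (U : Finset V) (v : V) : ℕ :=
  (K.filter fun e => e ⊆ U ∧ v ∈ e).card + (R.filter fun e => e ⊆ U ∧ v ∈ e).card

/-- The neighbours of `v` in `U` in the graph of the pairs in `P`. -/
def pairNbrs (P : Finset (Finset V)) (U : Finset V) (v : V) : Finset V :=
  U.filter fun u => v ≠ u ∧ {v, u} ∈ P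

lemma card_filter_subset_sdiff (K : Finset (Finset V)) (U S : Finset V) :
    (K.filter fun e => e ⊆ U).card =
      (K.filter fun e => e ⊆ U \ S).card + (K.filter fun e => e ⊆ U ∧ ¬ Disjoint e S).card := by
  rw [← card_filter_add_card_filter_not (s := K.filter fun e => e ⊆ U) fun e => Disjoint e S,
    filter_filter, filter_filter]
  congr 2
  ext e
  simp only [mem_filter, subset_sdiff]

lemma weight_erase (K R : Finset (Finset V)) (U : Finset V) (v : V) :
    weight K R U = weight K R (U.erase v) + starWeight K R U v := by
  have h : ∀ K : Finset (Finset V), (K.filter fun e => e ⊆ U).card =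
      (K.filter fun e => e ⊆ U.erase v).card + (K.filter fun e => e ⊆ U ∧ v ∈ e).card := by
    intro K
    rw [card_filter_subset_sdiff K U {v}, sdiff_singleton_eq_erase]
    simp
  rw [weight, weight, starWeight, h K, h R]
  omega

lemma weight_le_two_pow (K R : Finset (Finset V)) (U : Finset V) :
    weight K R U ≤ 2 ^ (U.card + 1) := by
  have h : ∀ K : Finset (Finset V), (K.filter fun e => e ⊆ U).card ≤ 2 ^ U.card := by
    intro K
    rw [← card_powerset]
    exact card_le_card fun e he => mem_powerset.2 (mem_filter.1 he).2
  have h1 := h K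
  have h2 := h R
  rw [weight, pow_succ]
  omega

/-- Adding the vertices of `D` to `A` one at a time, each with star weight at most `c`, increases the
weight by at most `c * D.card`. -/
lemma weight_le_add_mul {K R : Finset (Finset V)} {U A : Finset V} {c : ℕ}
    (hstep : ∀ v ∈ U, v ∉ A → ∀ W ⊆ U, starWeight K R W v ≤ c) (hA : A ⊆ U)
    (D : Finset V) (hD : D ⊆ U) (hAD : Disjoint A D) :
    weight K R (A ∪ D) ≤ weight K R A + c * D.card := by
  induction D using Finset.induction_on with
  | empty => simp
  | insert v D hv ih =>
    rw [disjoint_insert_right] at hAD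
    rw [insert_subset_iff] at hD
    have h1 := ih hD.2 hAD.2
    have h2 := hstep v hD.1 hAD.1 (A ∪ insert v D)
      (union_subset hA (insert_subset_iff.2 hD))
    have h3 : (A ∪ insert v D).erase v = A ∪ D := by
      rw [union_insert, erase_insert (by simp [hAD.1, hv])]
    rw [weight_erase K R _ v, h3, card_insert_of_notMem hv]
    nlinarith

/-- The link of `v` in `K` consists of `(r - 1)`-subsets of the blue neighbourhood of `v`. -/
lemma erase_mem_blue {K : Finset (Finset V)} {r : ℕ} (hK : ∀ e ∈ K, e.card = r) {U e : Finset V}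
    {v : V} (he : e ∈ K) (heU : e ⊆ U) (hv : v ∈ e) :
    e.erase v ∈ (pairNbrs (pairShadow K) U v).powersetCard (r - 1) := by
  rw [mem_powersetCard, card_erase_of_mem hv, hK e he]
  refine ⟨fun u hu => ?_, rfl⟩
  obtain ⟨huv, hue⟩ := mem_erase.1 hu
  simp only [pairNbrs, mem_filter, mem_pairShadow]
  exact ⟨heU hue, huv.symm, e, he, by simp [insert_subset_iff, hv, hue], card_pair huv.symm⟩

lemma red_star_le {R : Finset (Finset V)} (hR : ∀ p ∈ R, p.card = 2) (U : Finset V) (v : V) :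
    (R.filter fun e => e ⊆ U ∧ v ∈ e).card ≤ (pairNbrs R U v).card := by
  refine (card_le_card ?_).trans (card_image_le (f := fun u => ({v, u} : Finset V)))
  intro e he
  obtain ⟨heR, heU, hv⟩ := mem_filter.1 he
  have h1 : (e.erase v).card = 1 := by rw [card_erase_of_mem hv, hR e heR]
  obtain ⟨u, hu⟩ := card_eq_one.1 h1
  have h2 : e = {v, u} := by rw [← insert_erase hv, hu]
  have h3 : u ∈ e.erase v := by simp [hu]
  simp only [pairNbrs, mem_image, mem_filter]
  exact ⟨u, ⟨heU (mem_of_mem_erase h3), (ne_of_mem_erase h3).symm, h2 ▸ heR⟩, h2.symm⟩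

lemma erase_injOn (K : Finset (Finset V)) (v : V) (p : Finset V → Prop) [DecidablePred p] :
    Set.InjOn (fun e : Finset V => e.erase v)
      (K.filter fun e => p e ∧ v ∈ e : Finset (Finset V)) := by
  intro a ha b hb hab
  simp only [coe_filter, Set.mem_ofPred_eq] at ha hb
  rw [← insert_erase ha.2.2, ← insert_erase hb.2.2]
  exact congrArg _ hab

lemma starWeight_le {K R : Finset (Finset V)} {r : ℕ} (hK : ∀ e ∈ K, e.card = r)
    (hR : ∀ p ∈ R, p.card = 2) (U : Finset V) (v : V) :
    starWeight K R U v ≤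
      (pairNbrs (pairShadow K) U v).card.choose (r - 1) + (pairNbrs R U v).card := by
  refine Nat.add_le_add ?_ (red_star_le hR U v)
  rw [← card_powersetCard, ← card_image_of_injOn (erase_injOn K v fun e => e ⊆ U)]
  refine card_le_card fun s hs => ?_
  obtain ⟨e, he, rfl⟩ := mem_image.1 hs
  obtain ⟨heK, heU, hv⟩ := mem_filter.1 he
  exact erase_mem_blue hK heK heU hv

/-- The blue and red neighbours of `v` partition its neighbourhood, since red pairs lie outside the
shadow. -/
lemma pairNbrs_card {K R : Finset (Finset V)} (hd : Disjoint R (pairShadow K)) (U : Finset V)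
    (v : V) : (pairNbrs (pairShadow K) U v).card + (pairNbrs R U v).card =
      (pairNbrs (pairShadow K ∪ R) U v).card := by
  rw [← card_union_of_disjoint]
  · congr 1
    ext u
    simp only [pairNbrs, mem_union, mem_filter]
    tauto
  · rw [Finset.disjoint_left]
    intro u hu hu'
    exact Finset.disjoint_left.1 hd (mem_filter.1 hu').2.2 (mem_filter.1 hu).2.2

/-- Suppose that `A`, of size `ℓ`, contains a red pair `q` and all neighbours of `v`. If every vertex
of `A` is a blue neighbour of `v`, no blue hyperedge through `v` contains `q`, so at least one of the
`(r - 1)`-subsets of `A` is absent from the link of `v`; otherwise `choose_add_lt` applies. -/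
lemma starWeight_lt_of_red {K R : Finset (Finset V)} {r ℓ : ℕ} (hl : r + 6 ≤ ℓ) (hr : 3 ≤ r)
    (hK : ∀ e ∈ K, e.card = r) (hR : ∀ p ∈ R, p.card = 2) (hd : Disjoint R (pairShadow K))
    {A U : Finset V} {v : V} (hA : A.card = ℓ) {q : Finset V} (hq : q ∈ R) (hqA : q ⊆ A)
    (hv : pairNbrs (pairShadow K ∪ R) U v ⊆ A) :
    starWeight K R U v + 1 ≤ ℓ.choose (r - 1) := by
  have h1 := pairNbrs_card hd U v
  have h2 := card_le_card hv
  rw [hA] at h2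
  rcases Nat.lt_or_ge (pairNbrs (pairShadow K) U v).card ℓ with h | h
  · have := choose_add_lt hl hr h (ρ := (pairNbrs R U v).card) (by omega)
    have := starWeight_le hK hR U v
    omega
  · have h3 : (pairNbrs R U v).card = 0 := by omega
    have h4 : pairNbrs (pairShadow K) U v = A := by
      refine eq_of_subset_of_card_le (subset_trans ?_ hv) (by omega)
      intro u hu
      simp only [pairNbrs, mem_filter, mem_union] at hu ⊢
      tauto
    have h5 := red_star_le hR U v
    obtain ⟨s, hqs, hsA, hs⟩ := exists_subsuperset_card_eq hqA (n := r - 1)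
      (by rw [hR q hq]; omega) (by omega)
    have h6 : (K.filter fun e => e ⊆ U ∧ v ∈ e).card ≤ ((A.powersetCard (r - 1)).erase s).card := by
      rw [← card_image_of_injOn (erase_injOn K v fun e => e ⊆ U)]
      refine card_le_card fun t ht => ?_
      obtain ⟨e, he, rfl⟩ := mem_image.1 ht
      obtain ⟨heK, heU, hv⟩ := mem_filter.1 he
      refine mem_erase.2 ⟨?_, h4 ▸ erase_mem_blue hK heK heU hv⟩
      rintro rfl
      exact Finset.disjoint_left.1 hd hq
        (mem_pairShadow.2 ⟨e, heK, hqs.trans (erase_subset _ _), hR q hq⟩)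
    have h7 : s ∈ A.powersetCard (r - 1) := mem_powersetCard.2 ⟨hsA, hs⟩
    have h8 := card_pos.2 ⟨s, h7⟩
    rw [card_erase_of_mem h7] at h6
    rw [card_powersetCard, hA] at h6 h8
    rw [starWeight]
    omega

lemma pairNbrs_eq_filter (P : Finset (Finset V)) (U : Finset V) (v : V)
    [DecidablePred fun u => (pairGraph P).Adj v u] :
    pairNbrs P U v = U.filter fun u => (pairGraph P).Adj v u := by
  ext u
  rw [pairNbrs, mem_filter, mem_filter]
  exact Iff.rfl

open scoped Classical in
/-- `NoTwoPaths.cover_or_pendant` for the subgraph induced on `U`. -/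
lemma NoTwoPaths.cover_or_pendant_on {G : SimpleGraph V} {m : ℕ} (hm : 1 ≤ m)
    (h : NoTwoPaths G m) {U : Finset V} (hdeg : ∀ v ∈ U, m ≤ (U.filter fun w => G.Adj v w).card)
    (hU : 2 * m + 1 < U.card) :
    (∃ A ⊆ U, A.card = m ∧ ∀ a ∈ U, ∀ b ∈ U, G.Adj a b → a ∈ A ∨ b ∈ A) ∨
    ∃ S ⊆ U, ∃ c : V, S.card = m ∧ c ∉ S ∧
      ∀ x ∈ S, ∀ y ∈ U, G.Adj x y → y ∈ insert c S := by
  have h' : NoTwoPaths (G.comap (Subtype.val : {x // x ∈ U} → V)) m := by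
    intro l₁ l₂ c₁ c₂ hn n₁ n₂
    refine h (l₁.map Subtype.val) (l₂.map Subtype.val) ((List.isChain_map _).2 c₁)
      ((List.isChain_map _).2 c₂) ?_ (by simpa using n₁) (by simpa using n₂)
    rw [← List.map_append]
    exact hn.map Subtype.val_injective
  have hdeg' : ∀ v : {x // x ∈ U}, m ≤ (univ.filter fun w =>
      (G.comap (Subtype.val : {x // x ∈ U} → V)).Adj v w).card := by
    intro v
    refine (hdeg v v.2).trans ?_
    rw [← card_map (Function.Embedding.subtype fun x => x ∈ U)]
    refine card_le_card fun w hw => ?_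
    obtain ⟨hwU, hvw⟩ := mem_filter.1 hw
    exact mem_map.2 ⟨⟨w, hwU⟩, by simpa using hvw, rfl⟩
  rcases h'.cover_or_pendant hm hdeg' (by simpa using hU) with ⟨A, hA, hcov⟩ | ⟨S, c, hS, hc, hadj⟩
  · left
    refine ⟨A.map (Function.Embedding.subtype _), ?_, by rw [card_map, hA], ?_⟩
    · intro x hx
      obtain ⟨y, _, rfl⟩ := mem_map.1 hx
      exact y.2
    · intro a ha b hb hab
      rcases hcov ⟨a, ha⟩ ⟨b, hb⟩ hab with h | h
      · exact Or.inl (mem_map.2 ⟨_, h, rfl⟩)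
      · exact Or.inr (mem_map.2 ⟨_, h, rfl⟩)
  · right
    refine ⟨S.map (Function.Embedding.subtype _), ?_, c, by rw [card_map, hS], ?_, ?_⟩
    · intro x hx
      obtain ⟨y, _, rfl⟩ := mem_map.1 hx
      exact y.2
    · intro hx
      obtain ⟨y, hy, hyc⟩ := mem_map.1 hx
      rw [show y = c from Subtype.ext hyc] at hy
      exact hc hy
    · intro x hx y hy hxy
      obtain ⟨x, hx', rfl⟩ := mem_map.1 hx
      have h0 := hadj x hx' ⟨y, hy⟩ hxy
      simp only [mem_insert] at h0
      rcases h0 with h | h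
      · exact mem_insert.2 (Or.inl (congrArg Subtype.val h))
      · exact mem_insert_of_mem (mem_map.2 ⟨_, h, rfl⟩)

/-- The weight bound when `A` covers all pairs inside `U`. Without red pairs in `A`, the set `A`
itself has weight at most `ℓ.choose r` and every other vertex adds at most `ℓ.choose (r - 1)`. With a
red pair in `A`, every other vertex adds at least one less, which outweighs the possible weight
`2 ^ (ℓ + 1)` of `A`. -/
lemma weight_le_of_cover {K R : Finset (Finset V)} {r ℓ : ℕ} (hl : r + 6 ≤ ℓ) (hr : 3 ≤ r)
    (hK : ∀ e ∈ K, e.card = r) (hR : ∀ p ∈ R, p.card = 2) (hd : Disjoint R (pairShadow K))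
    {A U : Finset V} (hAU : A ⊆ U) (hA : A.card = ℓ) (hU : ℓ + 2 ^ (ℓ + 1) ≤ U.card)
    (hcov : ∀ a ∈ U, ∀ b ∈ U, (pairGraph (pairShadow K ∪ R)).Adj a b → a ∈ A ∨ b ∈ A) :
    weight K R U ≤ ℓ.choose (r - 1) * (U.card - ℓ) + ℓ.choose r := by
  classical
  have hnb : ∀ v ∈ U, v ∉ A → ∀ W ⊆ U, pairNbrs (pairShadow K ∪ R) W v ⊆ A := by
    intro v hv hvA W hW u hu
    rw [pairNbrs_eq_filter] at hu
    obtain ⟨huW, hvu⟩ := mem_filter.1 hu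
    exact (hcov v hv u (hW huW) hvu).resolve_left hvA
  have hUA : A ∪ U \ A = U := union_sdiff_of_subset hAU
  have hcard : (U \ A).card = U.card - ℓ := by rw [card_sdiff_of_subset hAU, hA]
  by_cases hred : ∃ q ∈ R, q ⊆ A
  · obtain ⟨q, hq, hqA⟩ := hred
    have h1 := weight_le_add_mul (K := K) (R := R) (c := ℓ.choose (r - 1) - 1)
      (fun v hv hvA W hW => by
        have := starWeight_lt_of_red hl hr hK hR hd hA hq hqA (hnb v hv hvA W hW)
        omega) hAU (U \ A) sdiff_subset disjoint_sdiff
    have h2 := weight_le_two_pow K R A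
    rw [hUA, hcard] at h1
    rw [hA] at h2
    have h3 := two_mul_le_choose hl hr
    obtain ⟨C, hC⟩ : ∃ C, ℓ.choose (r - 1) = C + 1 := ⟨ℓ.choose (r - 1) - 1, by omega⟩
    obtain ⟨d, hd⟩ : ∃ d, U.card = ℓ + 2 ^ (ℓ + 1) + d := ⟨_, (Nat.add_sub_of_le hU).symm⟩
    rw [hC, hd, show ℓ + 2 ^ (ℓ + 1) + d - ℓ = 2 ^ (ℓ + 1) + d by omega] at h1 ⊢
    rw [Nat.add_sub_cancel] at h1
    nlinarith
  · push Not at hred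
    have h1 := weight_le_add_mul (K := K) (R := R) (c := ℓ.choose (r - 1))
      (fun v hv hvA W hW => by
        have h1 := starWeight_le hK hR W v
        have h2 := pairNbrs_card hd W v
        have h3 := card_le_card (hnb v hv hvA W hW)
        rw [hA] at h3
        rcases Nat.lt_or_ge (pairNbrs (pairShadow K) W v).card ℓ with h | h
        · have := choose_add_lt hl hr h (ρ := (pairNbrs R W v).card) (by omega)
          omega
        · rw [show (pairNbrs (pairShadow K) W v).card = ℓ by omega] at h1
          omega) hAU (U \ A) sdiff_subset disjoint_sdiff
    rw [hUA, hcard] at h1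
    have h2 : weight K R A ≤ ℓ.choose r := by
      rw [weight, filter_false_of_mem hred, card_empty, add_zero, ← hA, ← card_powersetCard]
      refine card_le_card fun e he => ?_
      obtain ⟨heK, heA⟩ := mem_filter.1 he
      exact mem_powersetCard.2 ⟨heA, hK e heK⟩
    omega

/-- If all neighbours of vertices in `S` lie in `insert c S`, then removing the `ℓ` vertices of `S`
from `U` loses fewer than `(ℓ.choose (r - 1) - 1) * ℓ` members, as these all lie in an
`(ℓ + 1)`-set. -/
lemma weight_le_of_pendant {K R : Finset (Finset V)} {r ℓ : ℕ} (hl : r + 6 ≤ ℓ) (hr : 3 ≤ r)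
    (hK : ∀ e ∈ K, e.card = r) (hR : ∀ p ∈ R, p.card = 2)
    {S U : Finset V} {c : V} (hS : S.card = ℓ) (hc : c ∉ S)
    (hadj : ∀ x ∈ S, ∀ y ∈ U, (pairGraph (pairShadow K ∪ R)).Adj x y → y ∈ insert c S) :
    weight K R U + ℓ < weight K R (U \ S) + ℓ.choose (r - 1) * ℓ := by
  have hsub : ∀ (L : Finset (Finset V)) (k : ℕ), (∀ e ∈ L, e.card = k) →
      (∀ e ∈ L, ∀ x ∈ e, ∀ y ∈ e, x ≠ y → {x, y} ∈ pairShadow K ∪ R) →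
      (L.filter fun e => e ⊆ U ∧ ¬ Disjoint e S).card ≤ (ℓ + 1).choose k := by
    intro L k hk hL
    rw [← hS, ← card_insert_of_notMem hc, ← card_powersetCard]
    refine card_le_card fun e he => ?_
    obtain ⟨heL, heU, heS⟩ := mem_filter.1 he
    obtain ⟨x, hxe, hxS⟩ := not_disjoint_iff.1 heS
    refine mem_powersetCard.2 ⟨fun y hy => ?_, hk e heL⟩
    rcases eq_or_ne x y with rfl | hxy
    · exact mem_insert_of_mem hxS
    · exact hadj x hxS y (heU hy) ⟨hxy, hL e heL x hxe y hy hxy⟩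
  have h1 := hsub K r hK fun e he x hx y hy hxy => mem_union_left _
    (mem_pairShadow.2 ⟨e, he, by simp [insert_subset_iff, hx, hy], card_pair hxy⟩)
  have h2 := hsub R 2 hR fun e he x hx y hy hxy => mem_union_right _ (by
    have : {x, y} = e := eq_of_subset_of_card_le (by simp [insert_subset_iff, hx, hy])
      (by rw [card_pair hxy, hR e he])
    rwa [this])
  have h3 := pendant_choose_lt hl hr
  rw [weight, weight, card_filter_subset_sdiff K U S, card_filter_subset_sdiff R U S]
  omega

/-- The upper bound on the Turán number. -/
theorem card_le_of_not_isBergeCopy (r ℓ : ℕ) (hl : r + 6 ≤ ℓ) (hr : 3 ≤ r) :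
    ∃ N, ∀ n ≥ N, ∀ H : Finset (Finset (Fin n)), (∀ e ∈ H, e.card = r) →
      ¬ IsBergeCopy ((pathG ℓ).sum (pathG ℓ)) H →
      H.card ≤ ℓ.choose (r - 1) * (n - ℓ) + ℓ.choose r := by
  classical
  set M := 2 * ℓ + 2 ^ (ℓ + 1) + 1 with hM
  have hp1 : 0 < 2 ^ (M + 1) := by positivity
  have hp2 : 0 < 2 ^ (ℓ + 1) := by positivity
  refine ⟨ℓ.choose (r - 1) * ℓ + 2 ^ (M + 1) + ℓ, fun n hn H hH hB => ?_⟩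
  by_contra! hbig
  obtain ⟨K, R, ψ, hKH, hR, hd, hcard, hinj, hψ⟩ := exists_red_blue H
  have hK : ∀ e ∈ K, e.card = r := fun e he => hH e (hKH he)
  have hno := noTwoPaths_of_not_isBergeCopy hinj hψ hB
  have hC2 := two_mul_le_choose hl hr
  obtain ⟨C, hC⟩ : ∃ C, ℓ.choose (r - 1) = C + 1 := ⟨ℓ.choose (r - 1) - 1, by omega⟩
  -- `C` is `ℓ.choose (r - 1) - 1`, one less than the average gain per vertex in the extremal
  -- hypergraph, so that maximizing forces `U` to be large when `n` is
  obtain ⟨U, -, hU⟩ := exists_max_image (univ : Finset (Finset (Fin n)))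
    (fun U => (weight K R U : ℤ) - C * U.card) ⟨∅, by simp⟩
  simp only [mem_univ, true_imp_iff] at hU
  have hwuniv : weight K R univ = H.card := by simp [weight, hcard]
  have h0 := hU univ
  rw [hwuniv, card_univ, Fintype.card_fin] at h0
  have hUn : U.card ≤ n := by simpa using card_le_univ U
  obtain ⟨d, rfl⟩ : ∃ d, n = ℓ + d := ⟨n - ℓ, by omega⟩
  rw [hC, Nat.add_sub_cancel_left] at hbig
  have hlarge : M < U.card := by
    by_contra! hcon
    have h1 := weight_le_two_pow K R U
    have h2 : 2 ^ (U.card + 1) ≤ 2 ^ (M + 1) := Nat.pow_le_pow_right (by norm_num) (by omega)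
    rw [hC] at hn
    generalize 2 ^ (M + 1) = X at *
    zify at *
    nlinarith [mul_nonneg (Int.natCast_nonneg C) (Int.natCast_nonneg U.card)]
  -- `U` still exceeds the extremal bound for its own size
  have hexc : (C + 1) * (U.card - ℓ) + ℓ.choose r < weight K R U := by
    obtain ⟨u, hu⟩ : ∃ u, U.card = ℓ + u := ⟨U.card - ℓ, by omega⟩
    rw [hu] at h0 hUn
    rw [hu, Nat.add_sub_cancel_left]
    zify at *
    nlinarith
  -- deleting a vertex of smaller degree would increase the objective
  have hdeg : ∀ v ∈ U, ℓ ≤ (pairNbrs (pairShadow K ∪ R) U v).card := by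
    intro v hv
    by_contra! hcon
    have h1 := pairNbrs_card hd U v
    have h2 := starWeight_le hK hR U v
    have h3 := choose_add_lt hl hr (b := (pairNbrs (pairShadow K) U v).card)
      (ρ := (pairNbrs R U v).card + 1) (by omega) (by omega)
    have h4 := hU (U.erase v)
    have h5 := weight_erase K R U v
    have h6 := card_erase_add_one hv
    rw [← h6, h5] at h4
    push_cast at h4
    zify at *
    nlinarith
  rcases hno.cover_or_pendant_on (U := U) (by omega)
    (fun v hv => by simpa only [pairNbrs_eq_filter] using hdeg v hv) (by omega) with
    ⟨A, hAU, hA, hcov⟩ | ⟨S, hSU, c, hS, hc, hadj⟩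
  · have := weight_le_of_cover hl hr hK hR hd hAU hA (by omega) hcov
    rw [hC] at this
    omega
  · have h1 := weight_le_of_pendant hl hr hK hR hS hc hadj
    have h2 := hU (U \ S)
    have h3 := card_sdiff_add_card_eq_card hSU
    rw [hS] at h3
    rw [← h3] at h2
    rw [hC] at h1
    push_cast at h2
    zify at h1
    nlinarith

end Weights

/-! ### The extremal hypergraph and the Turán number -/

section LowerBound

/-- All `r`-sets inside `A` together with all `r`-sets meeting `A` in exactly `r - 1` points. -/
def coverHypergraph {V : Type*} [Fintype V] [DecidableEq V] (A : Finset V) (r : ℕ) :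
    Finset (Finset V) :=
  A.powersetCard r ∪ (Aᶜ ×ˢ A.powersetCard (r - 1)).image fun p => insert p.1 p.2

variable {V : Type*} [Fintype V] [DecidableEq V]

lemma card_of_mem_coverHypergraph {A e : Finset V} {r : ℕ} (hr : 1 ≤ r)
    (he : e ∈ coverHypergraph A r) : e.card = r := by
  rcases mem_union.1 he with h | h
  · exact (mem_powersetCard.1 h).2
  · obtain ⟨⟨v, s⟩, hvs, rfl⟩ := mem_image.1 h
    obtain ⟨hv, hs⟩ := mem_product.1 hvs
    obtain ⟨hsA, hs⟩ := mem_powersetCard.1 hs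
    rw [card_insert_of_notMem fun hvs => mem_compl.1 hv (hsA hvs), hs]
    omega

/-- Any two points of a hyperedge have at least one of them in `A`. -/
lemma coverHypergraph_cover {A e : Finset V} {r : ℕ} (he : e ∈ coverHypergraph A r) {x y : V}
    (hx : x ∈ e) (hy : y ∈ e) (hxy : x ≠ y) : x ∈ A ∨ y ∈ A := by
  rcases mem_union.1 he with h | h
  · exact Or.inl ((mem_powersetCard.1 h).1 hx)
  · obtain ⟨⟨v, s⟩, hvs, rfl⟩ := mem_image.1 h
    have hsA := (mem_powersetCard.1 (mem_product.1 hvs).2).1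
    rcases mem_insert.1 hx with rfl | hx
    · exact Or.inr (hsA ((mem_insert.1 hy).resolve_left hxy.symm))
    · exact Or.inl (hsA hx)

lemma card_coverHypergraph (A : Finset V) (r : ℕ) :
    (coverHypergraph A r).card =
      A.card.choose (r - 1) * (Fintype.card V - A.card) + A.card.choose r := by
  have hvs : ∀ v s, (v, s) ∈ Aᶜ ×ˢ A.powersetCard (r - 1) → v ∉ A ∧ s ⊆ A := by
    intro v s h
    obtain ⟨hv, hs⟩ := mem_product.1 h
    exact ⟨mem_compl.1 hv, (mem_powersetCard.1 hs).1⟩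
  rw [coverHypergraph, card_union_of_disjoint, card_image_of_injOn, card_product,
    card_powersetCard, card_powersetCard, card_compl]
  · ring
  · rintro ⟨v, s⟩ h ⟨v', s'⟩ h' heq
    obtain ⟨hv, hs⟩ := hvs v s h
    obtain ⟨hv', hs'⟩ := hvs v' s' h'
    simp only at heq
    have h1 : v ∈ insert v' s' := heq ▸ mem_insert_self v s
    obtain rfl : v = v' := (mem_insert.1 h1).resolve_right fun h => hv (hs' h)
    have h2 : s = s' := by
      rw [← erase_insert fun h => hv (hs h), heq, erase_insert fun h => hv (hs' h)]
    rw [h2]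
  · rw [Finset.disjoint_left]
    intro e he he'
    obtain ⟨⟨v, s⟩, h, rfl⟩ := mem_image.1 he'
    exact (hvs v s h).1 ((mem_powersetCard.1 he).1 (mem_insert_self v s))

/-- Two disjoint paths of odd length `2k + 1` contain a matching of size `2k + 2`, which a
set of `2k + 1` vertices cannot cover. -/
lemma not_isBergeCopy_coverHypergraph {A : Finset V} {r ℓ : ℕ} (hodd : Odd ℓ)
    (hA : A.card = ℓ) : ¬ IsBergeCopy ((pathG ℓ).sum (pathG ℓ)) (coverHypergraph A r) := by
  rintro ⟨f, φ, hf, -, hφ⟩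
  obtain ⟨k, rfl⟩ := hodd
  -- the `i`-th matching edge on each path joins the vertices `2i` and `2i + 1`
  let p : Fin (k + 1) → ℕ → Fin (2 * k + 1 + 1) := fun i b => ⟨2 * i + min b 1, by omega⟩
  let q : Fin (k + 1) ⊕ Fin (k + 1) → ℕ → Fin (2 * k + 1 + 1) ⊕ Fin (2 * k + 1 + 1) :=
    fun i b => i.map (fun i => p i b) fun i => p i b
  have hadj : ∀ i, ((pathG (2 * k + 1)).sum (pathG (2 * k + 1))).Adj (q i 0) (q i 1) := by
    rintro (i | i) <;> simp [q, p, pathG, SimpleGraph.fromRel_adj]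
  have hcov : ∀ i, ∃ b : ℕ, f (q i b) ∈ A := by
    intro i
    obtain ⟨h1, h2⟩ := hφ s(q i 0, q i 1) (hadj i)
    rcases coverHypergraph_cover h1 (h2 _ (Sym2.mem_mk_left _ _)) (h2 _ (Sym2.mem_mk_right _ _))
      (hf.ne (hadj i).ne) with h | h
    · exact ⟨0, h⟩
    · exact ⟨1, h⟩
  choose b hb using hcov
  have hinj : Function.Injective fun i => f (q i (b i)) := by
    intro i j hij
    have hij := hf hij
    rcases i with i | i <;> rcases j with j | j <;> simp [q, p, Fin.ext_iff] at hij ⊢ <;> omega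
  have hcard := card_le_card_of_injOn (s := univ) (fun i => f (q i (b i)))
    (fun i _ => hb i) hinj.injOn
  simp [hA] at hcard
  omega

end LowerBound

theorem ex_berge_two_equal_paths (r ℓ : ℕ) (hodd : Odd ℓ)
    (hl : r + 6 ≤ ℓ) (hr : 9 ≤ r + 6) :
    ∃ N, ∀ n ≥ N,
      exBerge r n ((pathG ℓ).sum (pathG ℓ)) =
        ℓ.choose (r - 1) * (n - ℓ) + ℓ.choose r := by
  obtain ⟨N, hN⟩ := card_le_of_not_isBergeCopy r ℓ hl (by omega)
  refine ⟨max N ℓ, fun n hn => IsGreatest.csSup_eq ⟨?_, ?_⟩⟩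
  · obtain ⟨A, -, hA⟩ := exists_subset_card_eq (s := (univ : Finset (Fin n))) (n := ℓ)
      (by simpa using le_of_max_le_right hn)
    refine ⟨coverHypergraph A r, fun e he => card_of_mem_coverHypergraph (by omega) he,
      not_isBergeCopy_coverHypergraph hodd hA, ?_⟩
    rw [card_coverHypergraph, hA, Fintype.card_fin]
  · rintro m ⟨H, hH, hB, rfl⟩
    exact hN n (le_of_max_le_left hn) H hH hB
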